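/- Let (J,Q,1) be a weak quadratic Jordan division algebra over a field k. Then for every a ∈ J the map δ_a := Q_{1,a} is an anti-derivation of J, i.e., δ_a(x·Q_y) = −δ_a(x)·Q_y + x·Q_{y,δ_a(y)} for all x,y ∈ J. -/

import Mathlib

/-!
Write `{x, b, c} = Qbil x c b` for the triple product (symmetric in `x, c`) and
`x ∘ y = {x, 1, y}`. The linearization of `QJ2` and `QJ3` in `a` is not available over small
fields; the division hypothesis replaces it, through inverses.

For invertible `y` with inverse `y⁻¹`, `QJ2` and `QJ3` give
`{b, y, x} = {y⁻¹, Q_y b, x}` and `{y, b, x} = {Q_y b, y⁻¹, x}` (`triple_swap`,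
`triple_swap_inv`). If `y` and `1 + y` are nonzero then `(1 + y)⁻¹ + (1 + y⁻¹)⁻¹ = 1`.
Substituting this sum for `1` in `{Q_{1+y} d, 1, x}` and applying the swap identities yields
`(y ∘ d) ∘ x = {y, d, x} + {d, y, x}` (`circ_circ`), valid in every characteristic.

Applied in the isotope with `Q`-operators `Q_a Q_u` and unit `u⁻¹`, the same identity reads
`{{y, u, d}, u, x} = {y, Q_u d, x} + {d, Q_u y, x}` (`triple_triple`). Expanding `QJ2` at `1 + a`
gives the sum of its components of degree one and two in `a`; the degree one component vanishes
by `circ_circ`, and the degree two component together with `triple_triple` at `x = 1` is the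
anti-derivation property.
-/

/-- A weak quadratic Jordan algebra `(J, Q, 1)` over a field `k`.
Endomorphisms act on the right: `x·Q_a` is `Q a x`; a paper product `A B`
(apply `A`, then `B`) corresponds to the Mathlib product `B * A`. -/
structure WeakQuadraticJordan (k J : Type*) [Field k] [AddCommGroup J]
    [Module k J] where
  Q : J → Module.End k J
  one : J
  one_ne_zero : one ≠ 0
  Q_smul : ∀ (t : k) (a : J), Q (t • a) = (t ^ 2) • Q a
  Qbil : J →ₗ[k] J →ₗ[k] Module.End k J
  Qbil_apply : ∀ a b : J, Qbil a b = Q (a + b) - Q a - Q b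
  QJ1 : Q one = 1
  QJ2 : ∀ a b x : J, Qbil a (Q a x) b = Q a (Qbil b x a)
  QJ3 : ∀ a b : J, Q (Q a b) = Q a * Q b * Q a

namespace WeakQuadraticJordan

variable {k J : Type*} [Field k] [AddCommGroup J] [Module k J]

/-- `V W a b` is the endomorphism `V_{a,b} : x ↦ b·Q_{a,x}`. -/
def V (W : WeakQuadraticJordan k J) (a b : J) : Module.End k J where
  toFun x := W.Qbil a x b
  map_add' x y := by simp
  map_smul' t x := by simp

/-- `δ` is an `ε`-derivation: `δ(a·Q_b) = ε·δ(a)·Q_b + a·Q_{b,δ(b)}`. -/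
def IsEpsDerivation (W : WeakQuadraticJordan k J) (ε : k) (δ : Module.End k J) : Prop :=
  ∀ a b : J, δ (W.Q b a) = ε • W.Q b (δ a) + W.Qbil b (δ b) a

/-- Every nonzero element is invertible (`Q_a` is a unit of `End k J`). -/
def IsDivision (W : WeakQuadraticJordan k J) : Prop :=
  ∀ a : J, a ≠ 0 → IsUnit (W.Q a)

end WeakQuadraticJordan

namespace WeakQuadraticJordan

variable {k J : Type*} [Field k] [AddCommGroup J] [Module k J] (W : WeakQuadraticJordan k J)

lemma Qbil_comm (a b : J) : W.Qbil a b = W.Qbil b a := by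
  rw [W.Qbil_apply, W.Qbil_apply, add_comm a b]; abel

lemma Q_add (a b : J) : W.Q (a + b) = W.Q a + W.Q b + W.Qbil a b := by
  rw [W.Qbil_apply]; abel

lemma Q_zero : W.Q 0 = 0 := by
  simpa using W.Q_smul 0 0

/-- The linearization of `QJ3` in its middle argument. -/
lemma Qbil_Q (a b c x : J) :
    W.Qbil (W.Q a b) (W.Q a c) x = W.Q a (W.Qbil b c (W.Q a x)) := by
  rw [W.Qbil_apply, ← map_add, W.QJ3, W.QJ3, W.QJ3, W.Qbil_apply]
  simp

lemma circ_eq (x b : J) : W.Qbil W.one x b = W.Qbil b x W.one := by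
  simpa [W.QJ1] using W.QJ2 W.one b x

lemma circ_comm (x b : J) : W.Qbil W.one x b = W.Qbil W.one b x := by
  rw [W.circ_eq, W.Qbil_comm, ← W.circ_eq]

lemma circ_one (b : J) : W.Qbil W.one b W.one = b + b := by
  rw [← W.circ_comm, W.Qbil_apply, ← two_smul k W.one, W.Q_smul, W.QJ1]
  simp only [LinearMap.sub_apply, LinearMap.smul_apply, Module.End.one_apply]
  module

/-- `{b, y, x} = {y⁻¹, Q_y b, x}`. -/
lemma triple_swap {y yi : J} (hy : IsUnit (W.Q y)) (hyi : W.Q y yi = y) (b x : J) :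
    W.Qbil b x y = W.Qbil yi x (W.Q y b) := by
  apply ((Module.End.isUnit_iff _).1 hy).1
  rw [← W.Qbil_Q, hyi, W.QJ2]

/-- `{y, b, x} = {Q_y b, y⁻¹, x}`. -/
lemma triple_swap_inv {y yi : J} (hy : IsUnit (W.Q y)) (hyi : W.Q y yi = y) (b x : J) :
    W.Qbil y x b = W.Qbil (W.Q y b) x yi := by
  obtain ⟨x, rfl⟩ := ((Module.End.isUnit_iff _).1 hy).2 x
  rw [W.Qbil_Q, hyi, W.QJ2]

lemma exists_inv {y : J} (hy : IsUnit (W.Q y)) : ∃ yi, W.Q y yi = y :=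
  ((Module.End.isUnit_iff _).1 hy).2 y

/-- `(y ∘ d) ∘ x = {y, d, x} + {d, y, x}`. -/
lemma circ_circ (hdiv : W.IsDivision) (y d x : J) :
    W.Qbil W.one x (W.Qbil W.one y d) = W.Qbil y x d + W.Qbil d x y := by
  by_cases hy0 : y = 0
  · simp [hy0]
  by_cases hp0 : W.one + y = 0
  · obtain rfl : y = -W.one := (neg_eq_of_add_eq_zero_right hp0).symm
    have h1 : W.Qbil W.one W.one d = d + d := by rw [W.circ_comm, W.circ_one]
    simp only [map_neg, LinearMap.neg_apply, h1, map_add, ← W.circ_eq x d]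
    abel
  have hy := hdiv y hy0
  have hp := hdiv _ hp0
  obtain ⟨yi, hyi⟩ := W.exists_inv hy
  obtain ⟨w, hw⟩ := W.exists_inv hp
  -- `Q_{1+y⁻¹}` and `Q_y` multiply to `Q_{1+y}` in either order.
  have hzy : ∀ e, W.Q (W.one + yi) (W.Q y e) = W.Q (W.one + y) e := by
    intro e
    have hu : W.Q yi (W.Q y e) = e := by
      apply ((Module.End.isUnit_iff _).1 hy).1
      have := congrArg (fun f => f e) (W.QJ3 y yi)
      simpa [hyi] using this.symm
    have := W.triple_swap hy hyi e W.one
    rw [Q_add, Q_add, W.QJ1]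
    simp only [LinearMap.add_apply, Module.End.one_apply, hu]
    rw [W.Qbil_comm W.one yi, ← this, W.Qbil_comm e, W.circ_comm e y]
    abel
  have hyz : ∀ e, W.Q y (W.Q (W.one + yi) e) = W.Q (W.one + y) e := by
    intro e
    obtain ⟨q, rfl⟩ := ((Module.End.isUnit_iff _).1 hy).2 e
    rw [hzy, Q_add, W.QJ1]
    simp only [LinearMap.add_apply, Module.End.one_apply, map_add]
    rw [W.circ_comm y (W.Q y q), W.circ_eq (W.Q y q) y, W.QJ2, W.circ_comm y q,
      W.circ_comm q y]
  have hz0 : W.one + yi ≠ 0 := by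
    intro h
    apply hp0
    rw [← hw, ← hyz, h, Q_zero]
    simp
  have hz := hdiv _ hz0
  obtain ⟨w', hw'⟩ := W.exists_inv hz
  -- `(1 + y)⁻¹ + (1 + y⁻¹)⁻¹ = 1`, checked after applying `Q_{1+y}`.
  have hsum : w + w' = W.one := by
    apply ((Module.End.isUnit_iff _).1 hp).1
    rw [map_add, hw, ← hyz, hw', map_add, hyi, Q_add, W.QJ1]
    simp only [LinearMap.add_apply, Module.End.one_apply, W.circ_one]
    abel
  have e1 := W.triple_swap_inv hp hw d x
  have e2 := W.triple_swap_inv hz hw' (W.Q y d) x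
  rw [hzy] at e2
  have e3 : W.Qbil W.one x (W.Q (W.one + y) d)
      = W.Qbil (W.one + y) x d + W.Qbil (W.one + yi) x (W.Q y d) := by
    rw [e1, e2, ← map_add, hsum, W.circ_eq]
  rw [Q_add, W.QJ1] at e3
  simp only [LinearMap.add_apply, Module.End.one_apply, map_add,
    ← W.triple_swap hy hyi] at e3
  linear_combination (norm := abel) e3

/-- The isotope of `W` at an invertible `u`: the `Q`-operators are `Q_a Q_u` (apply `Q_u`
first) and the unit is the inverse `ui` of `u`. -/
def isotope {u ui : J} (hu : IsUnit (W.Q u)) (hui : W.Q u ui = u) (hu0 : u ≠ 0) :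
    WeakQuadraticJordan k J where
  Q a := W.Q a * W.Q u
  one := ui
  one_ne_zero := by rintro rfl; exact hu0 (by simpa using hui.symm)
  Q_smul t a := by rw [W.Q_smul, smul_mul_assoc]
  Qbil := W.Qbil.compr₂ (LinearMap.mulRight k (W.Q u))
  Qbil_apply a b := by simp [W.Qbil_apply, sub_mul]
  QJ1 := by
    have h := W.QJ3 u ui
    rw [hui] at h
    have h2 : W.Q u * (W.Q ui * W.Q u) = W.Q u * 1 := by rw [← mul_assoc, ← h, mul_one]
    exact hu.mul_left_cancel h2
  QJ2 a b x := by
    simp only [LinearMap.compr₂_apply, LinearMap.mulRight_apply, Module.End.mul_apply]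
    rw [W.QJ2, W.Qbil_Q]
  QJ3 a b := by
    simp only [Module.End.mul_apply, W.QJ3, mul_assoc]

lemma isotope_isDivision (hdiv : W.IsDivision) {u ui : J} (hu : IsUnit (W.Q u))
    (hui : W.Q u ui = u) (hu0 : u ≠ 0) : (W.isotope hu hui hu0).IsDivision :=
  fun a ha => (hdiv a ha).mul hu

/-- `{{y, u, d}, u, x} = {y, Q_u d, x} + {d, Q_u y, x}`: the identity `circ_circ` in the isotope
at `u`, where the triple product is `{a, Q_u b, c}` and the circle product is `{a, u, c}`. -/
lemma triple_triple (hdiv : W.IsDivision) (u y d x : J) :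
    W.Qbil (W.Qbil y d u) x u = W.Qbil y x (W.Q u d) + W.Qbil d x (W.Q u y) := by
  by_cases hu0 : u = 0
  · simp [hu0, Q_zero]
  have hu := hdiv u hu0
  obtain ⟨ui, hui⟩ := W.exists_inv hu
  have h : W.Qbil ui x (W.Q u (W.Qbil ui y (W.Q u d)))
      = W.Qbil y x (W.Q u d) + W.Qbil d x (W.Q u y) :=
    (W.isotope hu hui hu0).circ_circ (W.isotope_isDivision hdiv hu hui hu0) y d x
  rw [← h, ← W.triple_swap hu hui, ← W.triple_swap hu hui, W.Qbil_comm d y]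

end WeakQuadraticJordan

/-- In a weak quadratic Jordan division algebra, for every `a` the map
`δ_a := Q_{1,a}` is an anti-derivation. -/
theorem Qbil_one_is_antiderivation {k J : Type*} [Field k] [AddCommGroup J] [Module k J]
    (W : WeakQuadraticJordan k J) (hdiv : W.IsDivision) (a : J) :
    W.IsEpsDerivation (-1) (W.Qbil W.one a) := by
  intro b y
  -- `QJ2` at `1 + y`, with the components of degree zero and three in `y` removed below.
  have h := W.QJ2 (W.one + y) b a
  rw [W.Q_add, W.QJ1] at h
  simp only [LinearMap.add_apply, Module.End.one_apply, map_add] at h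
  have h3 := W.QJ2 y b a
  have h0 := W.circ_eq a b
  -- The degree one component vanishes.
  have c1 := W.circ_circ hdiv y a b
  have c2 := W.circ_circ hdiv b a y
  rw [W.circ_comm b] at c1
  rw [W.circ_comm b a, W.circ_eq a b] at c2
  have t := W.triple_triple hdiv y b a W.one
  rw [W.Qbil_comm _ W.one, W.circ_comm, W.Qbil_comm b W.one, W.Qbil_comm a W.one] at t
  rw [W.circ_comm (W.Q y a) b] at h
  rw [W.Qbil_comm y b, W.Qbil_comm a b] at c1
  rw [W.Qbil_comm a y] at c2
  rw [W.circ_comm a y, h0, neg_one_smul]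
  rw [h0, h3, c1, c2, t] at h
  linear_combination (norm := abel) -h
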